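/- Let α > −1 and n ≥ 1, let ψ be analytic on 𝔻, not identically 0, and φ a nonconstant analytic self-map of 𝔻 with φ(0) = 0, and suppose D_{ψ,φ,n} is bounded on A_α². Then D_{ψ,φ,n} is normal (commutes with its adjoint) if and only if ψ(z) = a z^n and φ(z) = b z for some a ∈ ℂ \ {0} and b ∈ 𝔻 \ {0}; moreover, in this case D_{ψ,φ,n} is J-symmetric. -/

import Mathlib

open Complex Metric Set

noncomputable section

/-- The open unit disk in `ℂ`. -/
def unitDisk : Set ℂ := Metric.ball 0 1

/-- `wb2 α j` is `β(j)² = j!·Γ(α+2)/Γ(j+α+2)`, the square of the norm of `z^j` in `A_α²`. -/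
def wb2 (α : ℝ) (j : ℕ) : ℝ :=
  (j.factorial : ℝ) * Real.Gamma (α + 2) / Real.Gamma ((j : ℝ) + α + 2)

/-- The `j`-th Taylor coefficient of `f` at `0`. -/
def tcoeff (f : ℂ → ℂ) (j : ℕ) : ℂ := iteratedDeriv j f 0 / (j.factorial : ℂ)

/-- An abstract model of the weighted Bergman space `A_α²`: a complex Hilbert space `H`
whose elements are (identified with) the analytic functions on the unit disk with
square-summable weighted Taylor coefficients, with the weighted `ℓ²` inner product. -/
structure BergmanModel (α : ℝ) (H : Type) [NormedAddCommGroup H]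
    [InnerProductSpace ℂ H] where
  emb : H →ₗ[ℂ] (ℂ → ℂ)
  analyticOn : ∀ f : H, AnalyticOnNhd ℂ (emb f) unitDisk
  summable_norm : ∀ f : H, Summable (fun j => ‖tcoeff (emb f) j‖ ^ 2 * wb2 α j)
  inj : ∀ f g : H, Set.EqOn (emb f) (emb g) unitDisk → f = g
  exists_rep : ∀ F : ℂ → ℂ, AnalyticOnNhd ℂ F unitDisk →
      Summable (fun j => ‖tcoeff F j‖ ^ 2 * wb2 α j) →
      ∃ f : H, Set.EqOn (emb f) F unitDisk
  inner_eq : ∀ f g : H,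
      (@inner ℂ H _ f g) =
        ∑' j : ℕ, (starRingEnd ℂ) (tcoeff (emb f) j) * tcoeff (emb g) j * (wb2 α j : ℂ)

/-- The derivative-evaluation kernel `K_w^{(m)}(z) = m!·z^m / (β(m)²·(1-conj(w)·z)^(m+α+2))`. -/
def kern (α : ℝ) (m : ℕ) (w z : ℂ) : ℂ :=
  (m.factorial : ℂ) * z ^ m /
    ((wb2 α m : ℂ) * (1 - (starRingEnd ℂ) w * z) ^ ((m : ℂ) + (α : ℂ) + 2))

open Topology

lemma wb2_pos {α : ℝ} (hα : -1 < α) (j : ℕ) : 0 < wb2 α j := by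
  unfold wb2
  have h1 : 0 < Real.Gamma (α + 2) := Real.Gamma_pos_of_pos (by linarith)
  have h2 : 0 < Real.Gamma ((j : ℝ) + α + 2) :=
    Real.Gamma_pos_of_pos (by have := Nat.cast_nonneg (α := ℝ) j; linarith)
  positivity

lemma isOpen_disk : IsOpen unitDisk := Metric.isOpen_ball

lemma zero_mem_disk : (0 : ℂ) ∈ unitDisk := by simp [unitDisk]

lemma disk_nhds {z : ℂ} (hz : z ∈ unitDisk) : unitDisk ∈ 𝓝 z := isOpen_disk.mem_nhds hz

lemma eventuallyEq_of_eqOn {f g : ℂ → ℂ} (h : EqOn f g unitDisk) {z : ℂ} (hz : z ∈ unitDisk) :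
    f =ᶠ[𝓝 z] g := Filter.eventuallyEq_of_mem (disk_nhds hz) h

lemma tcoeff_congr {f g : ℂ → ℂ} (h : EqOn f g unitDisk) (j : ℕ) : tcoeff f j = tcoeff g j := by
  unfold tcoeff
  rw [(eventuallyEq_of_eqOn h zero_mem_disk).iteratedDeriv_eq]

lemma tcoeff_pow (i j : ℕ) : tcoeff (fun z => z ^ j) i = if i = j then 1 else 0 := by
  unfold tcoeff
  rw [iteratedDeriv_fun_pow_zero]
  split_ifs with h
  · subst h
    field_simp [Nat.factorial_ne_zero]
  · simp

lemma eqOn_zero_of_tcoeff {f : ℂ → ℂ} (hf : AnalyticOnNhd ℂ f unitDisk)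
    (h : ∀ j, tcoeff f j = 0) : EqOn f 0 unitDisk := by
  have hd : ∀ j, iteratedDeriv j f 0 = 0 := by
    intro j
    have := h j
    unfold tcoeff at this
    simpa [Nat.factorial_ne_zero] using this
  refine hf.eqOn_zero_of_preconnected_of_eventuallyEq_zero
    (convex_ball (0 : ℂ) 1).isPreconnected zero_mem_disk ?_
  refine analyticOrderAt_eq_top.mp ?_
  rw [ENat.eq_top_iff_forall_ge]
  intro m
  exact (natCast_le_analyticOrderAt_iff_iteratedDeriv_eq_zero (hf 0 zero_mem_disk)).mpr
    fun i _ => hd i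

lemma iteratedDeriv_conj (f : ℂ → ℂ) (j : ℕ) :
    iteratedDeriv j (fun z => (starRingEnd ℂ) (f ((starRingEnd ℂ) z))) =
      fun z => (starRingEnd ℂ) (iteratedDeriv j f ((starRingEnd ℂ) z)) := by
  induction j with
  | zero => simp
  | succ j ih =>
    rw [iteratedDeriv_succ, ih, iteratedDeriv_succ]
    funext z
    exact congrFun (deriv_conj_conj (𝕜 := ℂ) (f := iteratedDeriv j f)) z

lemma tcoeff_conj (f : ℂ → ℂ) (j : ℕ) :
    tcoeff (fun z => (starRingEnd ℂ) (f ((starRingEnd ℂ) z))) j =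
      (starRingEnd ℂ) (tcoeff f j) := by
  unfold tcoeff
  rw [iteratedDeriv_conj]
  simp

section model
variable {α : ℝ} {H : Type} [NormedAddCommGroup H] [InnerProductSpace ℂ H]

lemma exists_mono (M : BergmanModel α H) (j : ℕ) :
    ∃ e : H, EqOn (M.emb e) (fun z => z ^ j) unitDisk := by
  refine M.exists_rep _ (fun z _ => by fun_prop) ?_
  refine summable_of_ne_finset_zero (s := {j}) ?_
  intro b hb
  simp only [Finset.mem_singleton] at hb
  simp [tcoeff_pow, hb]

/-- The monomials, as elements of the model. -/
def mono (M : BergmanModel α H) (j : ℕ) : H := (exists_mono M j).choose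

lemma mono_spec (M : BergmanModel α H) (j : ℕ) :
    EqOn (M.emb (mono M j)) (fun z => z ^ j) unitDisk := (exists_mono M j).choose_spec

lemma tcoeff_mono (M : BergmanModel α H) (i j : ℕ) :
    tcoeff (M.emb (mono M j)) i = if i = j then 1 else 0 := by
  rw [tcoeff_congr (mono_spec M j), tcoeff_pow]

lemma inner_mono (M : BergmanModel α H) (j : ℕ) (f : H) :
    inner ℂ (mono M j) f = tcoeff (M.emb f) j * (wb2 α j : ℂ) := by
  rw [M.inner_eq, tsum_eq_single j]
  · simp [tcoeff_mono]
  · intro i hi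
    simp [tcoeff_mono, hi]

lemma inner_mono_mono (M : BergmanModel α H) (i j : ℕ) :
    inner ℂ (mono M i) (mono M j) = if i = j then (wb2 α j : ℂ) else 0 := by
  rw [inner_mono, tcoeff_mono]
  split_ifs with h
  · simp [h]
  · simp

lemma eq_of_inner (hα : -1 < α) (M : BergmanModel α H) {f g : H}
    (h : ∀ j, inner ℂ (mono M j) f = inner ℂ (mono M j) g) : f = g := by
  rw [← sub_eq_zero]
  apply M.inj
  rw [map_zero]
  apply eqOn_zero_of_tcoeff (M.analyticOn _)
  intro j
  have h1 : inner ℂ (mono M j) (f - g) = 0 := by rw [inner_sub_right, h, sub_self]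
  rw [inner_mono] at h1
  have := (wb2_pos hα j).ne'
  simpa [this] using h1

lemma mono_ne_zero (hα : -1 < α) (M : BergmanModel α H) (j : ℕ) : mono M j ≠ 0 := by
  intro h
  have h1 := inner_mono_mono M j j
  have := (wb2_pos hα j).ne'
  rw [h] at h1
  simp at h1
  exact this (by exact_mod_cast h1.symm)

lemma inner_J (M : BergmanModel α H) (Jm : H → H)
    (hJm : ∀ f : H, ∀ z ∈ unitDisk,
      M.emb (Jm f) z = (starRingEnd ℂ) (M.emb f ((starRingEnd ℂ) z))) (j : ℕ) (f : H) :
    inner ℂ (mono M j) (Jm f) = (starRingEnd ℂ) (inner ℂ (mono M j) f) := by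
  rw [inner_mono, inner_mono, tcoeff_congr (hJm f), tcoeff_conj]
  simp

variable [CompleteSpace H]

open ContinuousLinearMap in
/-- an operator which is diagonal on monomials has diagonal adjoint -/
lemma adjoint_diag (hα : -1 < α) (M : BergmanModel α H) (T : H →L[ℂ] H) (l : ℕ → ℂ)
    (hl : ∀ j, T (mono M j) = l j • mono M j) (j : ℕ) :
    adjoint T (mono M j) = (starRingEnd ℂ) (l j) • mono M j := by
  apply eq_of_inner hα M
  intro i
  rw [adjoint_inner_right, hl, inner_smul_left, inner_smul_right, inner_mono_mono]
  split_ifs with h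
  · simp [h]
  · simp

open ContinuousLinearMap in
lemma diag_normal (hα : -1 < α) (M : BergmanModel α H) (T : H →L[ℂ] H) (l : ℕ → ℂ)
    (hl : ∀ j, T (mono M j) = l j • mono M j) :
    T.comp (adjoint T) = (adjoint T).comp T := by
  ext f
  apply eq_of_inner hα M
  intro j
  simp only [comp_apply]
  rw [adjoint_inner_right, ← adjoint_inner_left, adjoint_diag hα M T l hl, hl]
  rw [inner_smul_left, adjoint_inner_right, hl, inner_smul_left, inner_smul_left,
    ← adjoint_inner_left, adjoint_diag hα M T l hl, inner_smul_left]
  ring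

open ContinuousLinearMap in
lemma diag_symm (hα : -1 < α) (M : BergmanModel α H) (T : H →L[ℂ] H) (l : ℕ → ℂ)
    (hl : ∀ j, T (mono M j) = l j • mono M j) (Jm : H → H)
    (hJm : ∀ f : H, ∀ z ∈ unitDisk,
      M.emb (Jm f) z = (starRingEnd ℂ) (M.emb f ((starRingEnd ℂ) z))) (f : H) :
    Jm (adjoint T (Jm f)) = T f := by
  apply eq_of_inner hα M
  intro j
  rw [inner_J M Jm hJm, adjoint_inner_right, hl, inner_smul_left, inner_J M Jm hJm,
    ← adjoint_inner_left, adjoint_diag hα M T l hl, inner_smul_left]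
  simp

open ContinuousLinearMap in
lemma normal_eigen (T : H →L[ℂ] H) (hT : T.comp (adjoint T) = (adjoint T).comp T) (c : ℂ) (v : H) :
    T v = c • v ↔ adjoint T v = (starRingEnd ℂ) c • v := by
  have hc : ∀ x, T (adjoint T x) = adjoint T (T x) := fun x => congrArg (fun S => S x) hT
  have key : ‖T v - c • v‖ ^ 2 = ‖adjoint T v - (starRingEnd ℂ) c • v‖ ^ 2 := by
    have h : inner ℂ (T v - c • v) (T v - c • v) =
        inner ℂ (adjoint T v - (starRingEnd ℂ) c • v) (adjoint T v - (starRingEnd ℂ) c • v) := by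
      have h1 : inner ℂ (adjoint T v) (adjoint T v) = inner ℂ (T v) (T v) := by
        rw [adjoint_inner_left, hc, adjoint_inner_right]
      have h2 : inner ℂ (adjoint T v) v = inner ℂ v (T v) := adjoint_inner_left _ _ _
      have h3 : inner ℂ v (adjoint T v) = inner ℂ (T v) v := adjoint_inner_right _ _ _
      simp only [inner_sub_left, inner_sub_right, inner_smul_left, inner_smul_right, h1, h2, h3,
        RingHomCompTriple.comp_apply, RingHom.id_apply]
      ring
    rw [inner_self_eq_norm_sq_to_K, inner_self_eq_norm_sq_to_K] at h
    exact_mod_cast h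
  rw [← sub_eq_zero, ← sub_eq_zero (a := adjoint T v), ← norm_eq_zero, ← norm_eq_zero (a := adjoint T v - _),
    ← sq_eq_zero_iff, key, sq_eq_zero_iff]

open ContinuousLinearMap in
/-- a normal lower triangular operator is diagonal -/
lemma diag_of_triangular (hα : -1 < α) (M : BergmanModel α H) (T : H →L[ℂ] H)
    (hT : T.comp (adjoint T) = (adjoint T).comp T)
    (htri : ∀ i j, i < j → inner ℂ (mono M i) (T (mono M j)) = 0) (j : ℕ) :
    ∃ c : ℂ, T (mono M j) = c • mono M j := by
  induction j using Nat.strong_induction_on with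
  | _ j ih =>
    refine ⟨inner ℂ (mono M j) (T (mono M j)) / (wb2 α j : ℂ), ?_⟩
    rw [normal_eigen T hT]
    apply eq_of_inner hα M
    intro i
    rw [adjoint_inner_right, inner_smul_right, inner_mono_mono]
    rcases lt_trichotomy i j with h | h | h
    · obtain ⟨c, hc⟩ := ih i h
      rw [hc, inner_smul_left, inner_mono_mono]
      simp [h.ne]
    · subst h
      have : (wb2 α i : ℂ) ≠ 0 := by exact_mod_cast (wb2_pos hα i).ne'
      simp [this]
    · rw [← inner_conj_symm, htri j i h]
      simp [h.ne']

/-- action on monomials -/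
lemma T_mono (M : BergmanModel α H) (n : ℕ) (ψ φ : ℂ → ℂ)
    (hφm : ∀ z ∈ unitDisk, φ z ∈ unitDisk) (T : H →L[ℂ] H)
    (hT : ∀ f : H, ∀ z ∈ unitDisk,
      M.emb (T f) z = ψ z * iteratedDeriv n (M.emb f) (φ z)) (j : ℕ) :
    EqOn (M.emb (T (mono M j))) (fun z => ψ z * ((j.descFactorial n : ℂ) * φ z ^ (j - n)))
      unitDisk := by
  intro z hz
  rw [hT _ z hz, (eventuallyEq_of_eqOn (mono_spec M j) (hφm z hz)).iteratedDeriv_eq,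
    iteratedDeriv_pow]

end model

/-- If `φ(0) = 0` and `D_{ψ,φ,n}` is bounded on `A_α²`, then `D_{ψ,φ,n}` is
normal iff `ψ(z) = a z^n` and `φ(z) = bz` with `a ∈ ℂ \ {0}` and `b ∈ 𝔻 \ {0}`; moreover,
in that case `D_{ψ,φ,n}` is `J`-symmetric. -/
theorem stmt_14 (α : ℝ) (hα : -1 < α) (n : ℕ) (hn : 1 ≤ n)
    (H : Type) [NormedAddCommGroup H] [InnerProductSpace ℂ H] [CompleteSpace H]
    (M : BergmanModel α H)
    (ψ : ℂ → ℂ) (hψa : AnalyticOnNhd ℂ ψ unitDisk)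
    (hψ0 : ∃ z ∈ unitDisk, ψ z ≠ 0)
    (φ : ℂ → ℂ) (hφa : AnalyticOnNhd ℂ φ unitDisk)
    (hφm : ∀ z ∈ unitDisk, φ z ∈ unitDisk)
    (hφnc : ∃ z ∈ unitDisk, ∃ w ∈ unitDisk, φ z ≠ φ w)
    (hφ0 : φ 0 = 0)
    (T : H →L[ℂ] H)
    (hT : ∀ f : H, ∀ z ∈ unitDisk,
      M.emb (T f) z = ψ z * iteratedDeriv n (M.emb f) (φ z))
    (Jm : H → H)
    (hJm : ∀ f : H, ∀ z ∈ unitDisk,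
      M.emb (Jm f) z = (starRingEnd ℂ) (M.emb f ((starRingEnd ℂ) z))) :
    (T.comp (ContinuousLinearMap.adjoint T) = (ContinuousLinearMap.adjoint T).comp T ↔
      ∃ a b : ℂ, a ≠ 0 ∧ b ∈ unitDisk ∧ b ≠ 0 ∧
        (∀ z ∈ unitDisk, ψ z = a * z ^ n) ∧ (∀ z ∈ unitDisk, φ z = b * z)) ∧
    (T.comp (ContinuousLinearMap.adjoint T) = (ContinuousLinearMap.adjoint T).comp T →
      ∀ f : H, Jm (ContinuousLinearMap.adjoint T (Jm f)) = T f) := by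
  have hTm := T_mono M n ψ φ hφm T hT
  have hz0 := zero_mem_disk
  have fwd : T.comp (ContinuousLinearMap.adjoint T) = (ContinuousLinearMap.adjoint T).comp T →
      ∃ l : ℕ → ℂ, ∀ j, T (mono M j) = l j • mono M j := by
    intro hN
    -- `T` kills low monomials
    have hlow : ∀ i, i < n → T (mono M i) = 0 := by
      intro i hi
      apply M.inj
      intro z hz
      rw [hTm i hz, Nat.descFactorial_eq_zero_iff_lt.mpr hi]
      simp
    have hψord : (n : ℕ∞) ≤ analyticOrderAt ψ 0 := by
      rw [natCast_le_analyticOrderAt_iff_iteratedDeriv_eq_zero (hψa 0 hz0)]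
      intro i hi
      have h1 : ContinuousLinearMap.adjoint T (mono M i) = 0 := by
        have := (normal_eigen T hN 0 (mono M i)).mp (by simp [hlow i hi])
        simpa using this
      have h2 : inner ℂ (mono M i) (T (mono M n)) = 0 := by
        rw [← ContinuousLinearMap.adjoint_inner_left, h1, inner_zero_left]
      have h3 : tcoeff (M.emb (T (mono M n))) i = 0 := by
        rw [inner_mono] at h2
        have := (wb2_pos hα i).ne'
        simpa [this] using h2
      have h4 : EqOn (M.emb (T (mono M n))) (fun z => (n.factorial : ℂ) * ψ z) unitDisk := by
        intro z hz
        rw [hTm n hz]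
        simp [Nat.descFactorial_self, mul_comm]
      rw [tcoeff_congr h4] at h3
      unfold tcoeff at h3
      rw [iteratedDeriv_const_mul_field] at h3
      simpa [Nat.factorial_ne_zero] using h3
    have hφord : (1 : ℕ∞) ≤ analyticOrderAt φ 0 := by
      rw [ENat.one_le_iff_ne_zero]
      exact (hφa 0 hz0).analyticOrderAt_ne_zero.mpr hφ0
    have htri : ∀ i j, i < j → inner ℂ (mono M i) (T (mono M j)) = 0 := by
      intro i j hij
      rcases lt_or_ge j n with hj | hj
      · rw [hlow j hj, inner_zero_right]
      have hψφ : AnalyticAt ℂ (ψ * φ ^ (j - n)) 0 := (hψa 0 hz0).mul ((hφa 0 hz0).pow _)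
      have hord : (j : ℕ∞) ≤ analyticOrderAt (ψ * φ ^ (j - n)) 0 := by
        rw [analyticOrderAt_mul (hψa 0 hz0) ((hφa 0 hz0).pow _), analyticOrderAt_pow (hφa 0 hz0)]
        have e : (j : ℕ∞) = (n : ℕ∞) + (j - n) • (1 : ℕ∞) := by
          rw [nsmul_one]
          exact_mod_cast (Nat.add_sub_cancel' hj).symm
        rw [e]
        exact add_le_add hψord (nsmul_le_nsmul_right hφord _)
      have h0 := (natCast_le_analyticOrderAt_iff_iteratedDeriv_eq_zero hψφ).mp hord i hij
      have h4 : EqOn (M.emb (T (mono M j)))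
          (fun z => (j.descFactorial n : ℂ) * (ψ * φ ^ (j - n)) z) unitDisk := by
        intro z hz
        rw [hTm j hz]
        simp only [Pi.mul_apply, Pi.pow_apply]
        ring
      rw [inner_mono, tcoeff_congr h4]
      unfold tcoeff
      rw [iteratedDeriv_const_mul_field, h0]
      simp
    choose l hl using diag_of_triangular hα M T hN htri
    exact ⟨l, hl⟩
  refine ⟨⟨fun hN => ?_, ?_⟩, fun hN f => ?_⟩
  · obtain ⟨l, hl⟩ := fwd hN
    have hval : ∀ j, ∀ z ∈ unitDisk,
        ψ z * ((j.descFactorial n : ℂ) * φ z ^ (j - n)) = l j * z ^ j := by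
      intro j z hz
      have h1 := hTm j hz
      rw [hl, map_smul] at h1
      have h2 := mono_spec M j hz
      simp only [Pi.smul_apply, smul_eq_mul] at h1
      rw [← h1, h2]
    have hfac : ∀ m : ℕ, (m.factorial : ℂ) ≠ 0 := fun m => by
      exact_mod_cast m.factorial_ne_zero
    obtain ⟨a, ha⟩ : ∃ a : ℂ, ∀ z ∈ unitDisk, ψ z = a * z ^ n := by
      refine ⟨l n / n.factorial, fun z hz => ?_⟩
      have := hval n z hz
      rw [Nat.descFactorial_self] at this
      have h := hfac n
      field_simp
      simpa using this
    have ha0 : a ≠ 0 := by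
      rintro rfl
      obtain ⟨z, hz, h⟩ := hψ0
      exact h (by simp [ha z hz])
    have hd : ∀ j, n ≤ j → (j.descFactorial n : ℂ) ≠ 0 := by
      intro j hj
      have : j.descFactorial n ≠ 0 := by
        rw [Ne, Nat.descFactorial_eq_zero_iff_lt]; omega
      exact_mod_cast this
    obtain ⟨b, hb⟩ : ∃ b : ℂ, ∀ z ∈ unitDisk, φ z = b * z := by
      refine ⟨l (n + 1) / (a * ((n + 1).descFactorial n : ℂ)), fun z hz => ?_⟩
      by_cases hzz : z = 0
      · simp [hzz, hφ0]
      have h := hval (n + 1) z hz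
      rw [ha z hz] at h
      have h1 := hd (n + 1) (by omega)
      have h2 : z ^ n ≠ 0 := pow_ne_zero _ hzz
      rw [Nat.add_sub_cancel_left, pow_one, pow_succ] at h
      rw [div_mul_eq_mul_div, eq_div_iff (mul_ne_zero ha0 h1)]
      apply mul_left_cancel₀ h2
      linear_combination h
    have hb0 : b ≠ 0 := by
      rintro rfl
      obtain ⟨z, hz, w, hw, h⟩ := hφnc
      exact h (by simp [hb z hz, hb w hw])
    refine ⟨a, b, ha0, ?_, hb0, ha, hb⟩
    by_contra hbn
    have hb1 : 1 ≤ ‖b‖ := by simpa [unitDisk] using hbn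
    have hhalf : (1 / 2 : ℂ) ∈ unitDisk := by
      simp only [unitDisk, mem_ball_zero_iff]; norm_num
    have hlj : ∀ j, n ≤ j → l j = a * (j.descFactorial n : ℂ) * b ^ (j - n) := by
      intro j hj
      have h := hval j _ hhalf
      rw [ha _ hhalf, hb _ hhalf] at h
      have h2 : (1 / 2 : ℂ) ^ j ≠ 0 := pow_ne_zero _ (by norm_num)
      apply mul_right_cancel₀ h2
      rw [← h]
      have e : (1 / 2 : ℂ) ^ j = (1 / 2) ^ n * (1 / 2) ^ (j - n) := by
        rw [← pow_add, Nat.add_sub_cancel' hj]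
      rw [e, mul_pow]
      ring
    have hbd : ∀ j, ‖l j‖ ≤ ‖T‖ := by
      intro j
      have h := T.le_opNorm (mono M j)
      rw [hl, norm_smul] at h
      exact le_of_mul_le_mul_right h (norm_pos_iff.mpr (mono_ne_zero hα M j))
    have hge : ∀ j, n ≤ j → ‖a‖ * j ≤ ‖T‖ := by
      intro j hj
      refine le_trans ?_ (hbd j)
      rw [hlj j hj, norm_mul, norm_mul, norm_pow, Complex.norm_natCast]
      have h1 : (j : ℝ) ≤ (j.descFactorial n : ℝ) := by
        obtain ⟨m, rfl⟩ : ∃ m, n = m + 1 := ⟨n - 1, by omega⟩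
        obtain ⟨k, rfl⟩ : ∃ k, j = k + 1 := ⟨j - 1, by omega⟩
        rw [Nat.succ_descFactorial_succ]
        have : 1 ≤ k.descFactorial m := by
          rw [Nat.one_le_iff_ne_zero, Ne, Nat.descFactorial_eq_zero_iff_lt]; omega
        exact_mod_cast Nat.le_mul_of_pos_right _ this
      have h2 : 1 ≤ ‖b‖ ^ (j - n) := one_le_pow₀ hb1
      calc ‖a‖ * j ≤ ‖a‖ * (j.descFactorial n : ℝ) := by gcongr
        _ ≤ ‖a‖ * (j.descFactorial n : ℝ) * ‖b‖ ^ (j - n) :=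
          le_mul_of_one_le_right (by positivity) h2
    have hapos : 0 < ‖a‖ := norm_pos_iff.mpr ha0
    obtain ⟨k, hk⟩ := exists_nat_gt (‖T‖ / ‖a‖)
    have h := hge (max n k) (le_max_left _ _)
    rw [div_lt_iff₀ hapos] at hk
    have h3 : (k : ℝ) ≤ ((max n k : ℕ) : ℝ) := by exact_mod_cast le_max_right n k
    nlinarith
  · rintro ⟨a, b, -, -, -, ha, hb⟩
    refine diag_normal hα M T (fun j => a * (j.descFactorial n : ℂ) * b ^ (j - n)) ?_
    intro j
    apply M.inj
    intro z hz
    rw [hTm j hz, map_smul]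
    simp only [Pi.smul_apply, smul_eq_mul]
    rw [mono_spec M j hz, ha z hz, hb z hz]
    rcases lt_or_ge j n with hj | hj
    · rw [Nat.descFactorial_eq_zero_iff_lt.mpr hj]
      simp
    · have e : z ^ j = z ^ n * z ^ (j - n) := by
        rw [← pow_add, Nat.add_sub_cancel' hj]
      simp only [e, mul_pow]
      ring
  · obtain ⟨l, hl⟩ := fwd hN
    exact diag_symm hα M T l hl Jm hJm f
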